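/- Let assumptions (A1)–(A2) hold and let (ρ,w) and (ρ̂,ŵ) be classical solutions of the rescaled barotropic gas flow system on (0,ℓ) with parameters ε, γ and ε̂, γ̂ respectively, with (ρ̂,ŵ) Lipschitz continuous. Then there exist constants ĉ, Ĉ > 0, depending only on the bounds in (A1)–(A2) and the Lipschitz bounds of (ρ̂,ŵ), such that for all τ ∈ [0,T]: ‖ρ(τ) − ρ̂(τ)‖²_{L²(0,ℓ)} + ε²‖w(τ) − ŵ(τ)‖²_{L²(0,ℓ)} + ∫₀^τ ‖w(s) − ŵ(s)‖³_{L³(0,ℓ)} ds ≤ Ĉ e^{ĉτ} (‖ρ(0) − ρ̂(0)‖²_{L²(0,ℓ)} + ε²‖w(0) − ŵ(0)‖²_{L²(0,ℓ)} + |γ − γ̂|^{3/2} + |ε² − ε̂²| + ∫₀^τ |h_∂(s) − ĥ_∂(s)|_∂ ds), where h_∂ and ĥ_∂ are the boundary traces at {0,ℓ} of the total specific enthalpies ε²w²/2 + P'(ρ) + gz and ε̂²ŵ²/2 + P'(ρ̂) + gz. -/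

import Mathlib

/-!
The proof compares the two flows through the relative energy, the Bregman distance of the energy
density `P(ρ) + ε² ρ w² / 2`. Its second derivative along the segment joining two admissible states
is a quadratic form whose mixed term is dominated under the subsonicity condition (A1), so the
relative energy is equivalent to `|ρ - ρ̂|² + ε² |w - ŵ|²`.

Its time derivative, up to the space derivative of the flux `(m - m̂)(h - ĥ)`, consists of three
parts: a remainder quadratic in the distance of the states; the friction term, in which the
monotonicity of `w ↦ |w| w` produces the dissipation `|w - ŵ|³` and Young's inequality with
exponents `3` and `3/2` absorbs the part caused by `γ - γ̂`; and a consistency error, because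
`(ρ̂, ŵ)` solves the momentum equation with parameter `ε` only up to `(ε² - ε̂²)(∂ₜŵ + ŵ ∂ₓŵ)`.

The flux is controlled on the boundary by the difference of the enthalpy traces, and Grönwall's
inequality closes the estimate. The constant sources contribute a factor `τ ≤ e^τ`, which keeps the
constants independent of `T`.
-/

open Set Function MeasureTheory

section Calculus

lemma continuous_deriv_fst_of_contDiff {f : ℝ → ℝ → ℝ} (hf : ContDiff ℝ 1 (uncurry f)) :
    Continuous fun p : ℝ × ℝ => deriv (fun t => f t p.2) p.1 := by
  have hswap : ContDiff ℝ 1 (uncurry fun (p : ℝ × ℝ) t => f t p.2) := by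
    fun_prop
  exact ((hswap.fderiv (n := 0) contDiff_fst (by simp)).continuous).clm_apply continuous_const

lemma hasDerivAt_intervalIntegral_of_contDiff {f : ℝ → ℝ → ℝ} (hf : ContDiff ℝ 1 (uncurry f))
    (a b t : ℝ) :
    HasDerivAt (fun s => ∫ x in a..b, f s x) (∫ x in a..b, deriv (fun s => f s x) t) t := by
  have hf' := continuous_deriv_fst_of_contDiff hf
  obtain ⟨M, hM⟩ := ((isCompact_closedBall t 1).prod isCompact_uIcc).exists_bound_of_continuousOn
    (hf'.continuousOn (s := Metric.closedBall t 1 ×ˢ uIcc a b))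
  refine (intervalIntegral.hasDerivAt_integral_of_dominated_loc_of_deriv_le
    (F' := fun s x => deriv (fun s => f s x) s)
    (bound := fun _ => M) (Metric.closedBall_mem_nhds t one_pos) ?_ ?_ ?_ ?_ ?_ ?_).2
  · exact .of_forall fun s => (by fun_prop : Continuous (f s)).aestronglyMeasurable
  · exact (by fun_prop : Continuous (f t)).intervalIntegrable _ _
  · exact (hf'.comp (.prodMk_right t)).aestronglyMeasurable
  · exact .of_forall fun x hx s hs => hM (s, x) ⟨hs, uIoc_subset_uIcc hx⟩
  · exact intervalIntegrable_const
  · exact .of_forall fun x _ s _ =>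
      (by fun_prop : Differentiable ℝ fun s => f s x).differentiableAt.hasDerivAt

lemma abs_deriv_fst_le_of_lipschitzWith {f : ℝ → ℝ → ℝ} {K : NNReal}
    (hf : LipschitzWith K (uncurry f)) (t x : ℝ) : |deriv (fun s => f s x) t| ≤ K := by
  have hslice := hf.comp (.prodMk_right x)
  rw [mul_one] at hslice
  exact norm_deriv_le_of_lipschitz hslice

lemma abs_deriv_snd_le_of_lipschitzWith {f : ℝ → ℝ → ℝ} {K : NNReal}
    (hf : LipschitzWith K (uncurry f)) (t x : ℝ) : |deriv (fun y => f t y) x| ≤ K := by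
  have hslice := hf.comp (.prodMk_left t)
  rw [mul_one] at hslice
  exact norm_deriv_le_of_lipschitz hslice

lemma exists_taylor_two {f : ℝ → ℝ} (hf : ContDiff ℝ 2 f) (x y : ℝ) :
    ∃ ξ ∈ uIcc x y, f y = f x + deriv f x * (y - x) + deriv (deriv f) ξ * (y - x) ^ 2 / 2 := by
  obtain rfl | hxy := eq_or_ne x y
  · exact ⟨x, left_mem_uIcc, by simp⟩
  obtain ⟨ξ, hξ, h⟩ := taylor_mean_remainder_lagrange_iteratedDeriv (n := 1) hxy hf.contDiffOn
  have hderiv : derivWithin f (uIcc x y) x = deriv f x :=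
    (hf.differentiable two_ne_zero x).derivWithin (uniqueDiffOn_uIcc hxy x left_mem_uIcc)
  have htaylor : taylorWithinEval f 1 (uIcc x y) x y = f x + deriv f x * (y - x) := by
    simp [taylorWithinEval_succ, iteratedDerivWithin_one, hderiv, mul_comm]
  have hiter : iteratedDeriv (1 + 1) f ξ = deriv (deriv f) ξ := by
    rw [iteratedDeriv_succ, iteratedDeriv_one]
  rw [htaylor, hiter] at h
  exact ⟨ξ, uIoo_subset_uIcc_self hξ, eq_add_of_sub_eq' (by simpa using h)⟩

lemma add_integral_le_exp_mul_of_deriv_le {E E' D G : ℝ → ℝ} {c τ : ℝ} (hc : 0 ≤ c) (hτ : 0 ≤ τ)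
    (hE : ∀ t ∈ Icc 0 τ, HasDerivAt E (E' t) t) (hD : Continuous D) (hG : Continuous G)
    (hD0 : ∀ t ∈ Icc 0 τ, 0 ≤ D t) (hG0 : ∀ t ∈ Icc 0 τ, 0 ≤ G t)
    (h : ∀ t ∈ Icc 0 τ, E' t + D t ≤ c * E t + G t) :
    E τ + ∫ t in 0..τ, D t ≤ Real.exp (c * τ) * (E 0 + ∫ t in 0..τ, G t) := by
  have hderiv (t) (ht : t ∈ Icc 0 τ) : HasDerivAt (fun s => Real.exp (-(c * s)) * E s)
      (Real.exp (-(c * t)) * (E' t - c * E t)) t :=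
    (((hasDerivAt_id' t).const_mul c).fun_neg.exp.mul (hE t ht)).congr_deriv (by ring)
  have hle (t) (ht : t ∈ Icc 0 τ) : Real.exp (-(c * t)) * (E' t - c * E t) ≤
      G t - Real.exp (-(c * τ)) * D t :=
    calc Real.exp (-(c * t)) * (E' t - c * E t)
        ≤ Real.exp (-(c * t)) * (G t - D t) :=
          mul_le_mul_of_nonneg_left (by linarith [h t ht]) (Real.exp_pos _).le
      _ = Real.exp (-(c * t)) * G t - Real.exp (-(c * t)) * D t := mul_sub _ _ _
      _ ≤ 1 * G t - Real.exp (-(c * τ)) * D t := by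
        gcongr
        · exact hG0 t ht
        · exact Real.exp_le_one_iff.2 (neg_nonpos.2 (mul_nonneg hc ht.1))
        · exact hD0 t ht
        · exact ht.2
      _ = G t - Real.exp (-(c * τ)) * D t := by rw [one_mul]
  have hint := intervalIntegral.sub_le_integral_of_hasDeriv_right_of_le hτ
    (fun t ht => (hderiv t ht).continuousAt.continuousWithinAt)
    (fun t ht => (hderiv t (Ioo_subset_Icc_self ht)).hasDerivWithinAt)
    (hG.fun_sub (hD.const_mul _)).continuousOn.integrableOn_Icc
    (fun t ht => hle t (Ioo_subset_Icc_self ht))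
  rw [intervalIntegral.integral_sub (hG.intervalIntegrable _ _)
    ((hD.const_mul _).intervalIntegrable _ _), intervalIntegral.integral_const_mul] at hint
  simp only [mul_zero, neg_zero, Real.exp_zero, one_mul] at hint
  calc E τ + ∫ t in 0..τ, D t
      = Real.exp (c * τ) * (Real.exp (-(c * τ)) * (E τ + ∫ t in 0..τ, D t)) := by
        rw [← mul_assoc, ← Real.exp_add, add_neg_cancel, Real.exp_zero, one_mul]
    _ ≤ Real.exp (c * τ) * (E 0 + ∫ t in 0..τ, G t) := by gcongr; linarith

lemma integral_add_integral_le_of_balance_le {e F V : ℝ → ℝ → ℝ} {G : ℝ → ℝ} {c b ℓ τ : ℝ}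
    (he : ContDiff ℝ 1 (uncurry e)) (hF : ContDiff ℝ 1 (uncurry F)) (hV : Continuous (uncurry V))
    (hG : Continuous G) (hc : 0 ≤ c) (hb : 0 ≤ b) (hℓ : 0 ≤ ℓ) (hτ : 0 ≤ τ)
    (hV0 : ∀ t x, 0 ≤ V t x)
    (hbalance : ∀ t ∈ Icc 0 τ, ∀ x ∈ Icc 0 ℓ,
      deriv (fun s => e s x) t + deriv (fun y => F t y) x + V t x ≤ c * e t x + b)
    (hflux : ∀ t ∈ Icc 0 τ, ℓ * b + |F t 0| + |F t ℓ| ≤ G t) :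
    (∫ x in 0..ℓ, e τ x) + ∫ t in 0..τ, ∫ x in 0..ℓ, V t x ≤
      Real.exp (c * τ) * ((∫ x in 0..ℓ, e 0 x) + ∫ t in 0..τ, G t) := by
  refine add_integral_le_exp_mul_of_deriv_le hc hτ
    (fun t _ => hasDerivAt_intervalIntegral_of_contDiff he 0 ℓ t) (by fun_prop) (by fun_prop)
    (fun t _ => intervalIntegral.integral_nonneg hℓ fun x _ => hV0 t x)
    (fun t ht => (by positivity : 0 ≤ ℓ * b + |F t 0| + |F t ℓ|).trans (hflux t ht))
    fun t ht => ?_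
  have he'_int : IntervalIntegrable (fun x => deriv (fun s => e s x) t) volume 0 ℓ :=
    ((continuous_deriv_fst_of_contDiff he).comp (.prodMk_right t)).intervalIntegrable _ _
  have hF'_int : IntervalIntegrable (deriv fun y => F t y) volume 0 ℓ :=
    (by fun_prop : Continuous (deriv fun y => F t y)).intervalIntegrable _ _
  have hV_int : IntervalIntegrable (V t) volume 0 ℓ :=
    (by fun_prop : Continuous (V t)).intervalIntegrable _ _
  have he_int : IntervalIntegrable (e t) volume 0 ℓ :=
    (by fun_prop : Continuous (e t)).intervalIntegrable _ _
  have hF_ftc : ∫ x in 0..ℓ, deriv (fun y => F t y) x = F t ℓ - F t 0 :=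
    intervalIntegral.integral_deriv_eq_sub
      (fun x _ => (by fun_prop : Differentiable ℝ fun y => F t y) x) hF'_int
  have hmono := intervalIntegral.integral_mono_on hℓ ((he'_int.add hF'_int).add hV_int)
    ((he_int.const_mul c).add (intervalIntegrable_const (c := b))) (hbalance t ht)
  rw [intervalIntegral.integral_add (he'_int.add hF'_int) hV_int,
    intervalIntegral.integral_add he'_int hF'_int, hF_ftc,
    intervalIntegral.integral_add (he_int.const_mul c) intervalIntegrable_const,
    intervalIntegral.integral_const_mul, intervalIntegral.integral_const, sub_zero,
    smul_eq_mul] at hmono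
  linarith [hflux t ht, le_abs_self (F t 0), neg_abs_le (F t ℓ)]

end Calculus

section RelativeEnergy

/-- The relative energy of the state `(ρ, w)` with respect to `(ρh, wh)`: the Bregman distance
of the energy density `P ρ + ε² ρ w² / 2`. -/
noncomputable def relEnergy (P : ℝ → ℝ) (ε ρ w ρh wh : ℝ) : ℝ :=
  P ρ - P ρh - deriv P ρh * (ρ - ρh)
    + ε ^ 2 * (ρ * (w - wh) ^ 2 / 2 + (ρ - ρh) * wh * (w - wh))

/-- The part of the time derivative of the relative energy that is quadratic in the distance of
the two states and linear in the time derivatives `ρh'`, `wh'` of the reference state. -/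
noncomputable def relEnergyRemainder (P : ℝ → ℝ) (ε ρ w ρh wh ρh' wh' : ℝ) : ℝ :=
  (deriv P ρ - deriv P ρh - deriv (deriv P) ρh * (ρ - ρh)) * ρh'
    + ε ^ 2 * ((w - wh) ^ 2 / 2 * ρh' + (ρ - ρh) * (w - wh) * wh')

variable {P : ℝ → ℝ} {ε εbar rlo rhi wbar : ℝ}

lemma hasDerivAt_relEnergy (hP : ContDiff ℝ 2 P) {ρ w ρh wh : ℝ → ℝ} {ρ' w' ρh' wh' t : ℝ}
    (hρ : HasDerivAt ρ ρ' t) (hw : HasDerivAt w w' t)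
    (hρh : HasDerivAt ρh ρh' t) (hwh : HasDerivAt wh wh' t) :
    HasDerivAt (fun s => relEnergy P ε (ρ s) (w s) (ρh s) (wh s))
      ((ε ^ 2 * w t ^ 2 / 2 + deriv P (ρ t) - (ε ^ 2 * wh t ^ 2 / 2 + deriv P (ρh t)))
          * (ρ' - ρh')
        + (ρ t * w t - ρh t * wh t) * (ε ^ 2 * (w' - wh'))
        + relEnergyRemainder P ε (ρ t) (w t) (ρh t) (wh t) ρh' wh') t := by
  have hP1 (r) : HasDerivAt P (deriv P r) r := (hP.differentiable two_ne_zero r).hasDerivAt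
  have hP2 (r) : HasDerivAt (deriv P) (deriv (deriv P) r) r :=
    (hP.deriv'.differentiable one_ne_zero r).hasDerivAt
  have hr := hρ.fun_sub hρh
  have hv := hw.fun_sub hwh
  refine ((((hP1 _).comp t hρ).sub ((hP1 _).comp t hρh)).sub (((hP2 _).comp t hρh).mul hr)).add
    ((((hρ.mul (hv.fun_pow 2)).div_const 2).add ((hr.mul hwh).mul hv)).const_mul (ε ^ 2))
    |>.congr_deriv ?_
  simp only [relEnergyRemainder, Pi.mul_apply, comp_apply]
  ring

lemma exists_relEnergy_eq_hessian (hP : ContDiff ℝ 2 P) (ε ρ w ρh wh : ℝ) :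
    ∃ s ∈ Icc (0 : ℝ) 1, relEnergy P ε ρ w ρh wh =
      (deriv (deriv P) (ρh + s * (ρ - ρh)) * (ρ - ρh) ^ 2
        + 2 * ε ^ 2 * (wh + s * (w - wh)) * (ρ - ρh) * (w - wh)
        + ε ^ 2 * (ρh + s * (ρ - ρh)) * (w - wh) ^ 2) / 2 := by
  set R : ℝ → ℝ := fun s => ρh + s * (ρ - ρh)
  set W : ℝ → ℝ := fun s => wh + s * (w - wh)
  have hR (s) : HasDerivAt R (ρ - ρh) s := (hasDerivAt_mul_const _).const_add _
  have hW (s) : HasDerivAt W (w - wh) s := (hasDerivAt_mul_const _).const_add _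
  have hderiv : deriv (fun s => relEnergy P ε (R s) (W s) ρh wh) = fun s =>
      (ε ^ 2 * W s ^ 2 / 2 + deriv P (R s) - (ε ^ 2 * wh ^ 2 / 2 + deriv P ρh)) * (ρ - ρh)
        + (R s * W s - ρh * wh) * (ε ^ 2 * (w - wh)) := by
    funext s
    rw [(hasDerivAt_relEnergy hP (hR s) (hW s) (hasDerivAt_const s ρh)
      (hasDerivAt_const s wh)).deriv]
    simp only [relEnergyRemainder, sub_zero, mul_zero, add_zero]
  have hderiv2 (s) : deriv (deriv fun s => relEnergy P ε (R s) (W s) ρh wh) s =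
      deriv (deriv P) (R s) * (ρ - ρh) ^ 2 + 2 * ε ^ 2 * W s * (ρ - ρh) * (w - wh)
        + ε ^ 2 * R s * (w - wh) ^ 2 := by
    have hP2 := (hP.deriv'.differentiable one_ne_zero (R s)).hasDerivAt.comp s (hR s)
    rw [hderiv]
    refine HasDerivAt.deriv (HasDerivAt.congr_deriv (((((((hW s).fun_pow 2).const_mul
      (ε ^ 2)).div_const 2).add hP2).sub_const _ |>.mul_const (ρ - ρh)).add
      ((((hR s).mul (hW s)).sub_const _).mul_const _)) ?_)
    ring
  have hsmooth : ContDiff ℝ 2 fun s => relEnergy P ε (R s) (W s) ρh wh := by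
    unfold relEnergy; fun_prop
  obtain ⟨s, hs, h⟩ := exists_taylor_two hsmooth 0 1
  rw [uIcc_of_le zero_le_one] at hs
  refine ⟨s, hs, ?_⟩
  rw [hderiv2, hderiv] at h
  simpa [R, W, relEnergy] using h

lemma abs_cross_term_le_of_subsonic {R W p r v : ℝ} (hR : 0 < R)
    (hsub : 4 * ε ^ 2 * W ^ 2 ≤ R * p) :
    |2 * ε ^ 2 * W * r * v| ≤ (p * r ^ 2 + ε ^ 2 * R * v ^ 2) / 2 := by
  have hscaled : R * |2 * ε ^ 2 * W * r * v| ≤ R * ((p * r ^ 2 + ε ^ 2 * R * v ^ 2) / 2) := by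
    rw [← abs_of_pos hR, ← abs_mul, abs_of_pos hR, abs_le]
    have hr := mul_le_mul_of_nonneg_right hsub (sq_nonneg r)
    constructor
    · nlinarith [mul_nonneg (sq_nonneg ε) (sq_nonneg (2 * W * r + R * v))]
    · nlinarith [mul_nonneg (sq_nonneg ε) (sq_nonneg (2 * W * r - R * v))]
  exact le_of_mul_le_mul_left hscaled hR

lemma relEnergy_mem_Icc (hP : ContDiff ℝ 2 P) {c C ρ w ρh wh : ℝ} (hrlo : 0 < rlo)
    (hsub : ∀ r ∈ Icc rlo rhi, 4 * εbar ^ 2 * wbar ^ 2 ≤ r * deriv (deriv P) r)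
    (hPlo : ∀ r ∈ Icc rlo rhi, 4 * c ≤ deriv (deriv P) r) (hclo : 4 * c ≤ rlo)
    (hPhi : ∀ r ∈ Icc rlo rhi, deriv (deriv P) r ≤ C) (hChi : rhi ≤ C)
    (hε : |ε| ≤ εbar) (hρ : ρ ∈ Icc rlo rhi) (hρh : ρh ∈ Icc rlo rhi)
    (hw : |w| ≤ wbar) (hwh : |wh| ≤ wbar) :
    relEnergy P ε ρ w ρh wh ∈ Icc (c * ((ρ - ρh) ^ 2 + ε ^ 2 * (w - wh) ^ 2))
      (C * ((ρ - ρh) ^ 2 + ε ^ 2 * (w - wh) ^ 2)) := by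
  obtain ⟨s, hs, h⟩ := exists_relEnergy_eq_hessian hP ε ρ w ρh wh
  have hR : ρh + s * (ρ - ρh) ∈ Icc rlo rhi := (convex_Icc rlo rhi).add_smul_sub_mem hρh hρ hs
  have hW : |wh + s * (w - wh)| ≤ wbar :=
    abs_le.2 ((convex_Icc (-wbar) wbar).add_smul_sub_mem (abs_le.1 hwh) (abs_le.1 hw) hs)
  set R := ρh + s * (ρ - ρh)
  set W := wh + s * (w - wh)
  have hsubW : 4 * ε ^ 2 * W ^ 2 ≤ R * deriv (deriv P) R :=
    calc 4 * ε ^ 2 * W ^ 2 ≤ 4 * εbar ^ 2 * wbar ^ 2 := by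
          rw [← sq_abs ε, ← sq_abs W]; gcongr
      _ ≤ R * deriv (deriv P) R := hsub R hR
  have hcross := abs_le.1 (abs_cross_term_le_of_subsonic (r := ρ - ρh) (v := w - wh)
    (hrlo.trans_le hR.1) hsubW)
  have hv : 0 ≤ ε ^ 2 * (w - wh) ^ 2 := by positivity
  have hr_lo := mul_le_mul_of_nonneg_right (hPlo R hR) (sq_nonneg (ρ - ρh))
  have hr_hi := mul_le_mul_of_nonneg_right (hPhi R hR) (sq_nonneg (ρ - ρh))
  have hv_lo := mul_le_mul_of_nonneg_right (hclo.trans hR.1) hv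
  have hv_hi := mul_le_mul_of_nonneg_right (hR.2.trans hChi) hv
  have hv_nonneg := mul_nonneg (hrlo.le.trans hR.1) hv
  have hr_nonneg : 0 ≤ deriv (deriv P) R * (ρ - ρh) ^ 2 :=
    mul_nonneg (nonneg_of_mul_nonneg_right (le_trans (by positivity) hsubW)
      (hrlo.trans_le hR.1)) (sq_nonneg _)
  rw [h]
  constructor
  · linear_combination hcross.1 / 2 + hr_lo / 4 + hv_lo / 4
  · linear_combination hcross.2 / 2 + hr_hi + hv_hi + hr_nonneg / 4 + hv_nonneg / 4

lemma exists_relEnergy_mem_Icc (hP : ContDiff ℝ 2 P) (hrlo : 0 < rlo) (hwbar : 0 < wbar)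
    (hεbar : 0 < εbar)
    (hsub : ∀ r ∈ Icc rlo rhi, 4 * εbar ^ 2 * wbar ^ 2 ≤ r * deriv (deriv P) r) :
    ∃ c C : ℝ, 0 < c ∧ 0 < C ∧ ∀ ε ρ w ρh wh : ℝ, |ε| ≤ εbar →
      ρ ∈ Icc rlo rhi → ρh ∈ Icc rlo rhi → |w| ≤ wbar → |wh| ≤ wbar →
      relEnergy P ε ρ w ρh wh ∈ Icc (c * ((ρ - ρh) ^ 2 + ε ^ 2 * (w - wh) ^ 2))
        (C * ((ρ - ρh) ^ 2 + ε ^ 2 * (w - wh) ^ 2)) := by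
  have hcont : ContinuousOn (deriv (deriv P)) (Icc rlo rhi) :=
    (by fun_prop : Continuous (deriv (deriv P))).continuousOn
  have hpos (r) (hr : r ∈ Icc rlo rhi) : 0 < deriv (deriv P) r :=
    pos_of_mul_pos_right ((by positivity : 0 < 4 * εbar ^ 2 * wbar ^ 2).trans_le (hsub r hr))
      (hrlo.le.trans hr.1)
  obtain ⟨m, hm, hPlo⟩ := isCompact_Icc.exists_forall_le' hcont hpos
  obtain ⟨M, hM⟩ := isCompact_Icc.exists_bound_of_continuousOn hcont
  refine ⟨min m rlo / 4, max (max M rhi) 1, by positivity, by positivity,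
    fun ε ρ w ρh wh hε hρ hρh hw hwh => relEnergy_mem_Icc hP hrlo hsub (fun r hr => ?_) ?_
      (fun r hr => ?_) ?_ hε hρ hρh hw hwh⟩
  · linarith [hPlo r hr, min_le_left m rlo]
  · linarith [min_le_right m rlo]
  · exact (le_abs_self _).trans ((hM r hr).trans ((le_max_left _ _).trans (le_max_left _ _)))
  · exact (le_max_right _ _).trans (le_max_left _ _)

lemma exists_relEnergyRemainder_le (hP : ContDiff ℝ 3 P) (εbar rlo rhi K : ℝ) :
    ∃ C : ℝ, ∀ ε ρ w ρh wh ρh' wh' : ℝ, |ε| ≤ εbar →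
      ρ ∈ Icc rlo rhi → ρh ∈ Icc rlo rhi → |ρh'| ≤ K → |wh'| ≤ K →
      relEnergyRemainder P ε ρ w ρh wh ρh' wh' ≤ C * ((ρ - ρh) ^ 2 + ε ^ 2 * (w - wh) ^ 2) := by
  have hP3 : Continuous (deriv (deriv (deriv P))) := hP.deriv'.deriv'.continuous_deriv_one
  obtain ⟨L, hL⟩ := (isCompact_Icc (a := rlo) (b := rhi)).exists_bound_of_continuousOn
    hP3.continuousOn
  refine ⟨(L + 1 + εbar) * K / 2, fun ε ρ w ρh wh ρh' wh' hε hρ hρh hρh' hwh' => ?_⟩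
  have htaylor : |deriv P ρ - deriv P ρh - deriv (deriv P) ρh * (ρ - ρh)| ≤
      L * (ρ - ρh) ^ 2 / 2 := by
    obtain ⟨ξ, hξ, h⟩ := exists_taylor_two (f := deriv P) hP.deriv' ρh ρ
    rw [h, add_assoc, add_sub_cancel_left, add_sub_cancel_left, abs_div, abs_mul, abs_sq,
      abs_two]
    gcongr
    exact hL ξ (uIcc_subset_Icc hρh hρ hξ)
  have hcross : |ε ^ 2 * ((ρ - ρh) * (w - wh))| ≤
      εbar * ((ρ - ρh) ^ 2 + ε ^ 2 * (w - wh) ^ 2) / 2 := by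
    calc |ε ^ 2 * ((ρ - ρh) * (w - wh))| = |ε| * (|ρ - ρh| * |ε * (w - wh)|) := by
          rw [← abs_mul, ← abs_mul]; ring_nf
      _ ≤ εbar * ((|ρ - ρh| ^ 2 + |ε * (w - wh)| ^ 2) / 2) := by
        gcongr
        · exact (abs_nonneg ε).trans hε
        linarith [two_mul_le_add_sq |ρ - ρh| |ε * (w - wh)|]
      _ = εbar * ((ρ - ρh) ^ 2 + ε ^ 2 * (w - wh) ^ 2) / 2 := by rw [sq_abs, sq_abs]; ring
  have hmul {x y A : ℝ} (hx : |x| ≤ A) (hy : |y| ≤ K) : x * y ≤ A * K :=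
    (le_abs_self _).trans ((abs_mul x y).trans_le
      (mul_le_mul hx hy (abs_nonneg _) ((abs_nonneg _).trans hx)))
  have hK : 0 ≤ K := (abs_nonneg _).trans hρh'
  have hL0 : 0 ≤ L := (norm_nonneg _).trans (hL ρ hρ)
  calc relEnergyRemainder P ε ρ w ρh wh ρh' wh'
      = (deriv P ρ - deriv P ρh - deriv (deriv P) ρh * (ρ - ρh)) * ρh'
        + ε ^ 2 * (w - wh) ^ 2 / 2 * ρh' + ε ^ 2 * ((ρ - ρh) * (w - wh)) * wh' := by
        unfold relEnergyRemainder; ring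
    _ ≤ L * (ρ - ρh) ^ 2 / 2 * K + ε ^ 2 * (w - wh) ^ 2 / 2 * K
        + εbar * ((ρ - ρh) ^ 2 + ε ^ 2 * (w - wh) ^ 2) / 2 * K :=
        add_le_add (add_le_add (hmul htaylor hρh')
          (hmul (abs_of_nonneg (by positivity)).le hρh')) (hmul hcross hwh')
    _ ≤ (L + 1 + εbar) * K / 2 * ((ρ - ρh) ^ 2 + ε ^ 2 * (w - wh) ^ 2) := by
      have hrest : 0 ≤ K * (L * (ε ^ 2 * (w - wh) ^ 2) + (ρ - ρh) ^ 2) := by positivity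
      linarith

end RelativeEnergy

section Friction

lemma abs_add_abs_mul_sq_le_mul_abs_mul_self_sub (w wh : ℝ) :
    (|w| + |wh|) * (w - wh) ^ 2 / 2 ≤ (w - wh) * (|w| * w - |wh| * wh) := by
  have hid : (w - wh) * (|w| * w - |wh| * wh) =
      (|w| + |wh|) * (w - wh) ^ 2 / 2 + (|w| - |wh|) ^ 2 * (|w| + |wh|) / 2 := by
    linear_combination ((|w| - |wh|) / 2) * (sq_abs wh - sq_abs w)
  have hnonneg : 0 ≤ (|w| - |wh|) ^ 2 * (|w| + |wh|) / 2 := by positivity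
  linarith

lemma abs_abs_mul_self_sub_le (w wh : ℝ) :
    |(|w| * w - |wh| * wh)| ≤ (|w| + |wh|) * |w - wh| :=
  calc |(|w| * w - |wh| * wh)|
      = |(|w| + |wh|) / 2 * (w - wh) + (|w| - |wh|) / 2 * (w + wh)| := by ring_nf
    _ ≤ |(|w| + |wh|) / 2 * (w - wh)| + |(|w| - |wh|) / 2 * (w + wh)| := abs_add_le _ _
    _ = (|w| + |wh|) / 2 * |w - wh| + |(|w| - |wh|)| / 2 * |w + wh| := by
      simp only [abs_mul, abs_div, abs_two,
        abs_of_nonneg (add_nonneg (abs_nonneg w) (abs_nonneg wh))]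
    _ ≤ (|w| + |wh|) / 2 * |w - wh| + |w - wh| / 2 * (|w| + |wh|) := by
      have hdiff := abs_abs_sub_abs_le_abs_sub w wh
      have hsum := abs_add_le w wh
      exact add_le_add_right (mul_le_mul (by linarith) hsum (abs_nonneg _) (by positivity)) _
    _ = (|w| + |wh|) * |w - wh| := by ring

lemma mul_le_mul_sq_add_sq_div {d : ℝ} (hd : 0 < d) (x y : ℝ) :
    x * y ≤ d / 4 * y ^ 2 + x ^ 2 / d := by
  have hsq : 0 ≤ d / 4 * (y - 2 * x / d) ^ 2 := by positivity
  refine le_of_sub_nonneg (hsq.trans_eq ?_)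
  field_simp
  ring

lemma exists_mul_mul_le_cube_add_rpow {A D : ℝ} (hA : 0 ≤ A) (hD : 0 < D) :
    ∃ C : ℝ, 0 ≤ C ∧ ∀ q u : ℝ, 0 ≤ q → 0 ≤ u →
      A * q * u ≤ D * u ^ 3 + C * q ^ ((3 : ℝ) / 2) := by
  obtain ⟨δ, hδ, hδD⟩ : ∃ δ : ℝ, 0 < δ ∧ δ ^ 3 = 3 * D :=
    ⟨(3 * D) ^ (((3 : ℕ) : ℝ)⁻¹), by positivity,
      Real.rpow_inv_natCast_pow (by positivity) three_ne_zero⟩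
  refine ⟨(A / δ) ^ ((3 : ℝ) / 2) / (3 / 2), by positivity, fun q u hq hu => ?_⟩
  have hyoung := Real.young_inequality_of_nonneg (mul_nonneg hδ.le hu)
    (mul_nonneg (div_nonneg hA hδ.le) hq) (p := 3) (q := 3 / 2)
    (Real.holderConjugate_iff.2 ⟨by norm_num, by norm_num⟩)
  rw [Real.mul_rpow (by positivity) hq] at hyoung
  calc A * q * u = δ * u * (A / δ * q) := by field_simp
    _ ≤ (δ * u) ^ (3 : ℝ) / 3 + (A / δ) ^ ((3 : ℝ) / 2) * q ^ ((3 : ℝ) / 2) / (3 / 2) := hyoung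
    _ = D * u ^ 3 + (A / δ) ^ ((3 : ℝ) / 2) / (3 / 2) * q ^ ((3 : ℝ) / 2) := by
      rw [show (δ * u) ^ (3 : ℝ) = 3 * D * u ^ 3 by rw [← hδD, ← mul_pow]; norm_cast]
      ring

variable {rlo rhi wbar γlo γhi ρ w ρh wh : ℝ}

lemma abs_momentum_sub_le (hrlo : 0 ≤ rlo) (hρ : ρ ∈ Icc rlo rhi) (hwh : |wh| ≤ wbar) :
    |ρ * w - ρh * wh| ≤ rhi * |w - wh| + wbar * |ρ - ρh| :=
  calc |ρ * w - ρh * wh| = |ρ * (w - wh) + wh * (ρ - ρh)| := by ring_nf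
    _ ≤ |ρ| * |w - wh| + |wh| * |ρ - ρh| := by
      simpa only [abs_mul] using abs_add_le (ρ * (w - wh)) (wh * (ρ - ρh))
    _ ≤ rhi * |w - wh| + wbar * |ρ - ρh| := by
      rw [abs_of_nonneg (hrlo.trans hρ.1)]
      gcongr
      exact hρ.2

lemma abs_momentum_sub_le_two_mul (hrlo : 0 ≤ rlo) (hρ : ρ ∈ Icc rlo rhi) (hρh : ρh ∈ Icc rlo rhi)
    (hw : |w| ≤ wbar) (hwh : |wh| ≤ wbar) : |ρ * w - ρh * wh| ≤ 2 * rhi * wbar := by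
  have hle {r u : ℝ} (hr : r ∈ Icc rlo rhi) (hu : |u| ≤ wbar) : |r * u| ≤ rhi * wbar := by
    rw [abs_mul, abs_of_nonneg (hrlo.trans hr.1)]
    exact mul_le_mul hr.2 hu (abs_nonneg u) (hrlo.trans (hr.1.trans hr.2))
  linarith [abs_sub (ρ * w) (ρh * wh), hle hρ hw, hle hρh hwh]

lemma neg_momentum_sub_mul_friction_sub_le {γ : ℝ} (hrlo : 0 < rlo) (hγlo : 0 ≤ γlo)
    (hγ : γ ∈ Icc γlo γhi) (hρ : rlo ≤ ρ) (hw : |w| ≤ wbar) (hwh : |wh| ≤ wbar) :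
    -((ρ * w - ρh * wh) * (γ * (|w| * w - |wh| * wh))) ≤
      2 * γhi * wbar ^ 3 / rlo * (ρ - ρh) ^ 2 - rlo * γlo / 4 * |w - wh| ^ 3 := by
  set S := |w| + |wh|
  have hγ0 : 0 ≤ γ := hγlo.trans hγ.1
  have hγhi : 0 ≤ γhi := hγ0.trans hγ.2
  have hwbar : 0 ≤ wbar := (abs_nonneg w).trans hw
  have hS : S ≤ 2 * wbar := by linarith
  have hdamping : -(ρ * γ * ((w - wh) * (|w| * w - |wh| * wh))) ≤
      -(ρ * γ * (S * (w - wh) ^ 2 / 2)) :=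
    neg_le_neg (mul_le_mul_of_nonneg_left (abs_add_abs_mul_sq_le_mul_abs_mul_self_sub w wh)
      (mul_nonneg (hrlo.le.trans hρ) hγ0))
  have hcross : -(wh * (ρ - ρh) * (γ * (|w| * w - |wh| * wh))) ≤
      γ * S * (wbar * |ρ - ρh| * |w - wh|) :=
    calc -(wh * (ρ - ρh) * (γ * (|w| * w - |wh| * wh)))
        ≤ |wh * (ρ - ρh) * (γ * (|w| * w - |wh| * wh))| := neg_le_abs _
      _ = |wh| * |ρ - ρh| * (γ * |(|w| * w - |wh| * wh)|) := by
        simp only [abs_mul, abs_of_nonneg hγ0]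
      _ ≤ wbar * |ρ - ρh| * (γ * (S * |w - wh|)) := by
        gcongr
        exact abs_abs_mul_self_sub_le w wh
      _ = γ * S * (wbar * |ρ - ρh| * |w - wh|) := by ring
  have hyoung : wbar * |ρ - ρh| * |w - wh| ≤
      rlo / 4 * (w - wh) ^ 2 + wbar ^ 2 / rlo * (ρ - ρh) ^ 2 := by
    have h := mul_le_mul_sq_add_sq_div hrlo (wbar * |ρ - ρh|) |w - wh|
    rwa [mul_pow, sq_abs, sq_abs, mul_div_right_comm] at h
  have hcubic : rlo * γlo / 4 * |w - wh| ^ 3 ≤ rlo * γ / 4 * (S * (w - wh) ^ 2) := by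
    rw [pow_succ', sq_abs]
    gcongr
    · exact hγ.1
    · exact abs_sub w wh
  have hquad : γ * S * (wbar ^ 2 / rlo * (ρ - ρh) ^ 2) ≤
      γhi * (2 * wbar) * (wbar ^ 2 / rlo * (ρ - ρh) ^ 2) := by
    gcongr
    exact hγ.2
  have hρS : rlo * (γ * (S * (w - wh) ^ 2 / 2)) ≤ ρ * (γ * (S * (w - wh) ^ 2 / 2)) := by gcongr
  have hcross_young := mul_le_mul_of_nonneg_left hyoung (by positivity : 0 ≤ γ * S)
  linear_combination hdamping + hcross + hcross_young + hcubic + hquad + hρS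

lemma exists_neg_momentum_sub_mul_friction_sub_le (hrlo : 0 < rlo) (hrr : rlo ≤ rhi)
    (hwbar : 0 ≤ wbar) (hγlo : 0 < γlo) (hγγ : γlo ≤ γhi) :
    ∃ C : ℝ, 0 ≤ C ∧ ∀ γ γh ρ w ρh wh : ℝ, γ ∈ Icc γlo γhi →
      ρ ∈ Icc rlo rhi → ρh ∈ Icc rlo rhi → |w| ≤ wbar → |wh| ≤ wbar →
      -((ρ * w - ρh * wh) * (γ * |w| * w - γh * |wh| * wh)) + rlo * γlo / 8 * |w - wh| ^ 3 ≤
        C * ((ρ - ρh) ^ 2 + |γ - γh| ^ ((3 : ℝ) / 2)) := by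
  have hrhi : 0 < rhi := hrlo.trans_le hrr
  have hγhi : 0 < γhi := hγlo.trans_le hγγ
  obtain ⟨Cv, hCv, hyoung_v⟩ := exists_mul_mul_le_cube_add_rpow
    (by positivity : 0 ≤ rhi * wbar ^ 2) (by positivity : 0 < rlo * γlo / 8)
  obtain ⟨Cr, hCr, hyoung_r⟩ := exists_mul_mul_le_cube_add_rpow
    (by positivity : 0 ≤ wbar ^ 3) one_pos
  refine ⟨2 * γhi * wbar ^ 3 / rlo + rhi + Cv + Cr, by positivity,
    fun γ γh ρ w ρh wh hγ hρ hρh hw hwh => ?_⟩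
  have hsame := neg_momentum_sub_mul_friction_sub_le (ρh := ρh) hrlo hγlo.le hγ hρ.1 hw hwh
  have hdiff : -((ρ * w - ρh * wh) * ((γ - γh) * (|wh| * wh))) ≤
      (rhi * |w - wh| + wbar * |ρ - ρh|) * (|γ - γh| * wbar ^ 2) :=
    calc -((ρ * w - ρh * wh) * ((γ - γh) * (|wh| * wh)))
        ≤ |(ρ * w - ρh * wh) * ((γ - γh) * (|wh| * wh))| := neg_le_abs _
      _ = |ρ * w - ρh * wh| * (|γ - γh| * |wh| ^ 2) := by
        simp only [abs_mul, abs_abs, sq]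
      _ ≤ (rhi * |w - wh| + wbar * |ρ - ρh|) * (|γ - γh| * wbar ^ 2) := by
        gcongr
        exact abs_momentum_sub_le hrlo.le hρ hwh
  have hr3 : |ρ - ρh| ^ 3 ≤ rhi * (ρ - ρh) ^ 2 := by
    rw [pow_succ', sq_abs]
    gcongr
    exact abs_le.2 ⟨by linarith [hρ.1, hρh.2], by linarith [hρ.2, hρh.1]⟩
  have hcoeff : 0 ≤ (2 * γhi * wbar ^ 3 / rlo + rhi) * |γ - γh| ^ ((3 : ℝ) / 2) +
      (Cv + Cr) * (ρ - ρh) ^ 2 := by positivity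
  linear_combination hsame + hdiff + hr3 + hcoeff +
    hyoung_v |γ - γh| |w - wh| (abs_nonneg _) (abs_nonneg _) +
    hyoung_r |γ - γh| |ρ - ρh| (abs_nonneg _) (abs_nonneg _)

end Friction

section GasFlow

/-- The total specific enthalpy `h = ε² w² / 2 + P'(ρ) + ψ`, where the potential `ψ` stands for
the gravity term `g z`. -/
noncomputable def enthalpy (P ψ : ℝ → ℝ) (ε : ℝ) (ρ w : ℝ → ℝ → ℝ) (t x : ℝ) : ℝ :=
  ε ^ 2 * w t x ^ 2 / 2 + deriv P (ρ t x) + ψ x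

/-- The frictionless part `ε² ∂ₜw + ∂ₓh` of the momentum equation. -/
noncomputable def momentumResidual (P ψ : ℝ → ℝ) (ε : ℝ) (ρ w : ℝ → ℝ → ℝ) (t x : ℝ) : ℝ :=
  ε ^ 2 * deriv (fun s => w s x) t + deriv (fun y => enthalpy P ψ ε ρ w t y) x

/-- The constants in the assumptions (A1)–(A2): the length of the pipe, the bounds of density,
velocity, `ε`, cross-section and friction coefficient, and the Lipschitz constant of the reference
flow. -/
structure PipeBounds where
  (ℓ rlo rhi wbar εbar alo ahi γlo γhi : ℝ)
  K : NNReal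
  ℓ_nonneg : 0 ≤ ℓ
  rlo_pos : 0 < rlo
  rlo_le_rhi : rlo ≤ rhi
  wbar_pos : 0 < wbar
  εbar_pos : 0 < εbar
  alo_pos : 0 < alo
  alo_le_ahi : alo ≤ ahi
  γlo_pos : 0 < γlo
  γlo_le_γhi : γlo ≤ γhi

/-- Classical solutions of the rescaled barotropic gas flow system on `[0, T] × [0, ℓ]` with
values in the admissible set `[rlo, rhi] × [-wbar, wbar]`. The fields are defined on the whole
plane; the equations and bounds are only required on the rectangle. -/
structure IsGasFlow (B : PipeBounds) (P a ψ : ℝ → ℝ) (T ε γ : ℝ) (ρ w : ℝ → ℝ → ℝ) : Prop where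
  contDiff_density : ContDiff ℝ 1 (uncurry ρ)
  contDiff_velocity : ContDiff ℝ 1 (uncurry w)
  density_mem : ∀ t ∈ Icc 0 T, ∀ x ∈ Icc 0 B.ℓ, ρ t x ∈ Icc B.rlo B.rhi
  abs_velocity_le : ∀ t ∈ Icc 0 T, ∀ x ∈ Icc 0 B.ℓ, |w t x| ≤ B.wbar
  mass : ∀ t ∈ Icc 0 T, ∀ x ∈ Icc 0 B.ℓ,
    a x * deriv (fun s => ρ s x) t + deriv (fun y => a y * ρ t y * w t y) x = 0
  momentum : ∀ t ∈ Icc 0 T, ∀ x ∈ Icc 0 B.ℓ,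
    momentumResidual P ψ ε ρ w t x + γ * |w t x| * w t x = 0

/-- Two gas flows `(ρ, w)` and `(ρh, wh)` in the same pipe, with parameters `ε`, `γ` and `εh`,
`γh`; `(ρh, wh)` is the reference flow, whose Lipschitz constant enters the estimates. -/
structure IsGasFlowPair (B : PipeBounds) (P a ψ : ℝ → ℝ) (T ε εh γ γh : ℝ)
    (ρ w ρh wh : ℝ → ℝ → ℝ) : Prop where
  contDiff_area : ContDiff ℝ 1 a
  contDiff_potential : ContDiff ℝ 1 ψ
  area_mem : ∀ x ∈ Icc 0 B.ℓ, a x ∈ Icc B.alo B.ahi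
  abs_ε_le : |ε| ≤ B.εbar
  γ_mem : γ ∈ Icc B.γlo B.γhi
  flow : IsGasFlow B P a ψ T ε γ ρ w
  refFlow : IsGasFlow B P a ψ T εh γh ρh wh
  lipschitz_density : LipschitzWith B.K (uncurry ρh)
  lipschitz_velocity : LipschitzWith B.K (uncurry wh)

/-- The density, per unit length of pipe, of the relative energy of two flows. -/
noncomputable def relEnergyDensity (P a : ℝ → ℝ) (ε : ℝ) (ρ w ρh wh : ℝ → ℝ → ℝ) (t x : ℝ) : ℝ :=
  a x * relEnergy P ε (ρ t x) (w t x) (ρh t x) (wh t x)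

/-- The flux of the relative energy, i.e. the product of the differences of mass flux and
enthalpy. Both enthalpies are taken with the same parameter `ε`. -/
noncomputable def relEnergyFlux (P a ψ : ℝ → ℝ) (ε : ℝ) (ρ w ρh wh : ℝ → ℝ → ℝ) (t x : ℝ) : ℝ :=
  (a x * ρ t x * w t x - a x * ρh t x * wh t x)
    * (enthalpy P ψ ε ρ w t x - enthalpy P ψ ε ρh wh t x)

/-- The squared distance `‖ρ - ρh‖² + ε² ‖w - wh‖²` in `L²(0, ℓ)` of two flows at time `t`. -/
noncomputable def stateDistSq (ℓ ε : ℝ) (ρ w ρh wh : ℝ → ℝ → ℝ) (t : ℝ) : ℝ :=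
  (∫ x in 0..ℓ, (ρ t x - ρh t x) ^ 2) + ε ^ 2 * ∫ x in 0..ℓ, (w t x - wh t x) ^ 2

/-- The Euclidean norm of the difference of the enthalpy traces at `{0, ℓ}`. -/
noncomputable def boundaryEnthalpyDist (P ψ : ℝ → ℝ) (ℓ ε εh : ℝ) (ρ w ρh wh : ℝ → ℝ → ℝ)
    (t : ℝ) : ℝ :=
  √((enthalpy P ψ ε ρ w t 0 - enthalpy P ψ εh ρh wh t 0) ^ 2
    + (enthalpy P ψ ε ρ w t ℓ - enthalpy P ψ εh ρh wh t ℓ) ^ 2)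

variable {P a ψ : ℝ → ℝ} {ρ w ρh wh : ℝ → ℝ → ℝ} {T ℓ ε εh γ γh : ℝ}

lemma contDiff_enthalpy (hP : ContDiff ℝ 2 P) (hψ : ContDiff ℝ 1 ψ)
    (hρ : ContDiff ℝ 1 (uncurry ρ)) (hw : ContDiff ℝ 1 (uncurry w)) :
    ContDiff ℝ 1 (uncurry (enthalpy P ψ ε ρ w)) := by
  have : ContDiff ℝ 1 (deriv P) := hP.deriv'
  unfold enthalpy
  fun_prop

lemma contDiff_relEnergyDensity (hP : ContDiff ℝ 2 P) (ha : ContDiff ℝ 1 a)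
    (hρ : ContDiff ℝ 1 (uncurry ρ)) (hw : ContDiff ℝ 1 (uncurry w))
    (hρh : ContDiff ℝ 1 (uncurry ρh)) (hwh : ContDiff ℝ 1 (uncurry wh)) :
    ContDiff ℝ 1 (uncurry (relEnergyDensity P a ε ρ w ρh wh)) := by
  have hP0 : ContDiff ℝ 1 P := hP.of_le one_le_two
  have : ContDiff ℝ 1 (deriv P) := hP.deriv'
  unfold relEnergyDensity relEnergy
  fun_prop

lemma contDiff_relEnergyFlux (hP : ContDiff ℝ 2 P) (ha : ContDiff ℝ 1 a) (hψ : ContDiff ℝ 1 ψ)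
    (hρ : ContDiff ℝ 1 (uncurry ρ)) (hw : ContDiff ℝ 1 (uncurry w))
    (hρh : ContDiff ℝ 1 (uncurry ρh)) (hwh : ContDiff ℝ 1 (uncurry wh)) :
    ContDiff ℝ 1 (uncurry (relEnergyFlux P a ψ ε ρ w ρh wh)) := by
  have hh := contDiff_enthalpy (ε := ε) hP hψ hρ hw
  have hhh := contDiff_enthalpy (ε := ε) hP hψ hρh hwh
  unfold relEnergyFlux
  fun_prop

lemma continuous_boundaryEnthalpyDist (hP : ContDiff ℝ 2 P) (hψ : ContDiff ℝ 1 ψ)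
    (hρ : ContDiff ℝ 1 (uncurry ρ)) (hw : ContDiff ℝ 1 (uncurry w))
    (hρh : ContDiff ℝ 1 (uncurry ρh)) (hwh : ContDiff ℝ 1 (uncurry wh)) :
    Continuous (boundaryEnthalpyDist P ψ ℓ ε εh ρ w ρh wh) := by
  have hh := contDiff_enthalpy (ε := ε) hP hψ hρ hw
  have hhh := contDiff_enthalpy (ε := εh) hP hψ hρh hwh
  unfold boundaryEnthalpyDist
  fun_prop

lemma momentumResidual_eq_add (hP : ContDiff ℝ 2 P) (hψ : ContDiff ℝ 1 ψ)
    (hρ : ContDiff ℝ 1 (uncurry ρ)) (hw : ContDiff ℝ 1 (uncurry w)) (ε εh t x : ℝ) :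
    momentumResidual P ψ ε ρ w t x = momentumResidual P ψ εh ρ w t x
      + (ε ^ 2 - εh ^ 2) * (deriv (fun s => w s x) t + w t x * deriv (fun y => w t y) x) := by
  have hh := contDiff_enthalpy (ε := εh) hP hψ hρ hw
  have hh' : HasDerivAt (fun y => enthalpy P ψ εh ρ w t y)
      (deriv (fun y => enthalpy P ψ εh ρ w t y) x) x :=
    (by fun_prop : Differentiable ℝ fun y => enthalpy P ψ εh ρ w t y) x |>.hasDerivAt
  have hw' : HasDerivAt (fun y => w t y) (deriv (fun y => w t y) x) x :=
    (by fun_prop : Differentiable ℝ fun y => w t y) x |>.hasDerivAt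
  have hsplit : (fun y => enthalpy P ψ ε ρ w t y) =
      fun y => enthalpy P ψ εh ρ w t y + (ε ^ 2 - εh ^ 2) / 2 * w t y ^ 2 := by
    funext y; unfold enthalpy; ring
  rw [momentumResidual, momentumResidual, hsplit,
    (hh'.fun_add ((hw'.fun_pow 2).const_mul _)).deriv]
  ring

lemma deriv_relEnergyDensity_add_deriv_relEnergyFlux (hP : ContDiff ℝ 2 P)
    (ha : ContDiff ℝ 1 a) (hψ : ContDiff ℝ 1 ψ)
    (hρ : ContDiff ℝ 1 (uncurry ρ)) (hw : ContDiff ℝ 1 (uncurry w))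
    (hρh : ContDiff ℝ 1 (uncurry ρh)) (hwh : ContDiff ℝ 1 (uncurry wh)) {t x : ℝ}
    (hmass : a x * deriv (fun s => ρ s x) t + deriv (fun y => a y * ρ t y * w t y) x = 0)
    (hmassh : a x * deriv (fun s => ρh s x) t + deriv (fun y => a y * ρh t y * wh t y) x = 0) :
    deriv (fun s => relEnergyDensity P a ε ρ w ρh wh s x) t
        + deriv (fun y => relEnergyFlux P a ψ ε ρ w ρh wh t y) x =
      a x * (relEnergyRemainder P ε (ρ t x) (w t x) (ρh t x) (wh t x)
          (deriv (fun s => ρh s x) t) (deriv (fun s => wh s x) t)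
        + (ρ t x * w t x - ρh t x * wh t x)
          * (momentumResidual P ψ ε ρ w t x - momentumResidual P ψ ε ρh wh t x)) := by
  have hderiv {f : ℝ → ℝ} {y : ℝ} (hf : Differentiable ℝ f) : HasDerivAt f (deriv f y) y :=
    (hf y).hasDerivAt
  have hh := contDiff_enthalpy (ε := ε) hP hψ hρ hw
  have hhh := contDiff_enthalpy (ε := ε) hP hψ hρh hwh
  have hdensity : deriv (fun s => relEnergyDensity P a ε ρ w ρh wh s x) t = _ :=
    ((hasDerivAt_relEnergy hP
      (hderiv (by fun_prop : Differentiable ℝ fun s => ρ s x))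
      (hderiv (by fun_prop : Differentiable ℝ fun s => w s x))
      (hderiv (by fun_prop : Differentiable ℝ fun s => ρh s x))
      (hderiv (by fun_prop : Differentiable ℝ fun s => wh s x))).const_mul (a x)).deriv
  have hflux : deriv (fun y => relEnergyFlux P a ψ ε ρ w ρh wh t y) x = _ :=
    (((hderiv (by fun_prop : Differentiable ℝ fun y => a y * ρ t y * w t y)).sub
      (hderiv (by fun_prop : Differentiable ℝ fun y => a y * ρh t y * wh t y))).mul
      ((hderiv (by fun_prop : Differentiable ℝ fun y => enthalpy P ψ ε ρ w t y)).sub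
      (hderiv (by fun_prop : Differentiable ℝ fun y => enthalpy P ψ ε ρh wh t y)))).deriv
  rw [hdensity, hflux, eq_neg_of_add_eq_zero_right hmass, eq_neg_of_add_eq_zero_right hmassh]
  simp only [Pi.sub_apply, enthalpy, momentumResidual]
  ring

variable {B : PipeBounds}

lemma exists_production_le (hP : ContDiff ℝ 3 P) (B : PipeBounds) :
    ∃ C : ℝ, 0 ≤ C ∧ ∀ ε εh γ γh ρ w ρh wh ρh' wh' whx : ℝ, |ε| ≤ B.εbar →
      γ ∈ Icc B.γlo B.γhi → ρ ∈ Icc B.rlo B.rhi → ρh ∈ Icc B.rlo B.rhi →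
      |w| ≤ B.wbar → |wh| ≤ B.wbar → |ρh'| ≤ B.K → |wh'| ≤ B.K → |whx| ≤ B.K →
      relEnergyRemainder P ε ρ w ρh wh ρh' wh'
          - (ρ * w - ρh * wh) * (γ * |w| * w - γh * |wh| * wh)
          - (ρ * w - ρh * wh) * ((ε ^ 2 - εh ^ 2) * (wh' + wh * whx))
          + B.rlo * B.γlo / 8 * |w - wh| ^ 3 ≤
        C * ((ρ - ρh) ^ 2 + ε ^ 2 * (w - wh) ^ 2
          + (|γ - γh| ^ ((3 : ℝ) / 2) + |ε ^ 2 - εh ^ 2|)) := by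
  obtain ⟨Cr, hCr⟩ := exists_relEnergyRemainder_le hP B.εbar B.rlo B.rhi B.K
  obtain ⟨Cf, hCf, hfriction⟩ := exists_neg_momentum_sub_mul_friction_sub_le B.rlo_pos
    B.rlo_le_rhi B.wbar_pos.le B.γlo_pos B.γlo_le_γhi
  have hwbar := B.wbar_pos
  have hrhi := B.rlo_pos.trans_le B.rlo_le_rhi
  set Cε := 2 * B.rhi * B.wbar * (B.K + B.wbar * B.K)
  have : 0 ≤ Cε := by positivity
  refine ⟨|Cr| + Cf + Cε, by positivity,
    fun ε εh γ γh ρ w ρh wh ρh' wh' whx hε hγ hρ hρh hw hwh hρh' hwh' hwhx => ?_⟩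
  have hparam : -((ρ * w - ρh * wh) * ((ε ^ 2 - εh ^ 2) * (wh' + wh * whx))) ≤
      Cε * |ε ^ 2 - εh ^ 2| :=
    calc -((ρ * w - ρh * wh) * ((ε ^ 2 - εh ^ 2) * (wh' + wh * whx)))
        ≤ |ρ * w - ρh * wh| * (|ε ^ 2 - εh ^ 2| * |wh' + wh * whx|) := by
          rw [← abs_mul, ← abs_mul]; exact neg_le_abs _
      _ ≤ 2 * B.rhi * B.wbar * (|ε ^ 2 - εh ^ 2| * (B.K + B.wbar * B.K)) := by
        gcongr
        · exact abs_momentum_sub_le_two_mul B.rlo_pos.le hρ hρh hw hwh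
        · refine (abs_add_le _ _).trans (add_le_add hwh' ?_)
          rw [abs_mul]
          gcongr
      _ = Cε * |ε ^ 2 - εh ^ 2| := by ring
  have hN : 0 ≤ (ρ - ρh) ^ 2 + ε ^ 2 * (w - wh) ^ 2 := by positivity
  have hremainder := (hCr ε ρ w ρh wh ρh' wh' hε hρ hρh hρh' hwh').trans
    (mul_le_mul_of_nonneg_right (le_abs_self Cr) hN)
  have hcoeff : 0 ≤ |Cr| * (|γ - γh| ^ ((3 : ℝ) / 2) + |ε ^ 2 - εh ^ 2|)
      + Cf * (ε ^ 2 * (w - wh) ^ 2 + |ε ^ 2 - εh ^ 2|)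
      + Cε * ((ρ - ρh) ^ 2 + ε ^ 2 * (w - wh) ^ 2 + |γ - γh| ^ ((3 : ℝ) / 2)) := by positivity
  linear_combination hremainder + hfriction γ γh ρ w ρh wh hγ hρ hρh hw hwh + hparam + hcoeff

lemma exists_relEnergy_balance_le (hP : ContDiff ℝ 3 P) (B : PipeBounds) :
    ∃ C : ℝ, 0 ≤ C ∧ ∀ {a ψ T ε εh γ γh ρ w ρh wh},
      IsGasFlowPair B P a ψ T ε εh γ γh ρ w ρh wh → ∀ t ∈ Icc 0 T, ∀ x ∈ Icc 0 B.ℓ,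
      deriv (fun s => relEnergyDensity P a ε ρ w ρh wh s x) t
          + deriv (fun y => relEnergyFlux P a ψ ε ρ w ρh wh t y) x
          + a x * (B.rlo * B.γlo / 8 * |w t x - wh t x| ^ 3) ≤
        a x * (C * ((ρ t x - ρh t x) ^ 2 + ε ^ 2 * (w t x - wh t x) ^ 2
          + (|γ - γh| ^ ((3 : ℝ) / 2) + |ε ^ 2 - εh ^ 2|))) := by
  have hP2 : ContDiff ℝ 2 P := hP.of_le (by norm_num)
  obtain ⟨C, hC, hproduction⟩ := exists_production_le hP B
  refine ⟨C, hC, fun {a ψ T ε εh γ γh ρ w ρh wh} hpair t ht x hx => ?_⟩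
  obtain ⟨ha, hψ, hax, hε, hγ, hs, hsh, hLρ, hLw⟩ := hpair
  have hbalance := deriv_relEnergyDensity_add_deriv_relEnergyFlux (ε := ε) hP2 ha hψ
    hs.contDiff_density hs.contDiff_velocity hsh.contDiff_density hsh.contDiff_velocity
    (hs.mass t ht x hx) (hsh.mass t ht x hx)
  rw [momentumResidual_eq_add hP2 hψ hsh.contDiff_density hsh.contDiff_velocity ε εh,
    eq_neg_of_add_eq_zero_left (hs.momentum t ht x hx),
    eq_neg_of_add_eq_zero_left (hsh.momentum t ht x hx)] at hbalance
  have hprod := hproduction ε εh γ γh _ _ _ _ _ _ _ hε hγ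
    (hs.density_mem t ht x hx) (hsh.density_mem t ht x hx)
    (hs.abs_velocity_le t ht x hx) (hsh.abs_velocity_le t ht x hx)
    (abs_deriv_fst_le_of_lipschitzWith hLρ t x) (abs_deriv_fst_le_of_lipschitzWith hLw t x)
    (abs_deriv_snd_le_of_lipschitzWith hLw t x)
  have ha0 : 0 ≤ a x := B.alo_pos.le.trans (hax x hx).1
  linear_combination hbalance + mul_le_mul_of_nonneg_left hprod ha0

lemma exists_relEnergy_dissipation (hP : ContDiff ℝ 3 P) (B : PipeBounds)
    (hsub : ∀ r ∈ Icc B.rlo B.rhi, 4 * B.εbar ^ 2 * B.wbar ^ 2 ≤ r * deriv (deriv P) r) :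
    ∃ lam C : ℝ, 0 ≤ lam ∧ 0 ≤ C ∧ ∀ {a ψ T ε εh γ γh ρ w ρh wh},
      IsGasFlowPair B P a ψ T ε εh γ γh ρ w ρh wh → ∀ t ∈ Icc 0 T, ∀ x ∈ Icc 0 B.ℓ,
      deriv (fun s => relEnergyDensity P a ε ρ w ρh wh s x) t
          + deriv (fun y => relEnergyFlux P a ψ ε ρ w ρh wh t y) x
          + B.alo * (B.rlo * B.γlo / 8) * |w t x - wh t x| ^ 3 ≤
        lam * relEnergyDensity P a ε ρ w ρh wh t x
          + C * (|γ - γh| ^ ((3 : ℝ) / 2) + |ε ^ 2 - εh ^ 2|) := by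
  obtain ⟨c, _, hc, _, henergy⟩ := exists_relEnergy_mem_Icc (hP.of_le (by norm_num)) B.rlo_pos
    B.wbar_pos B.εbar_pos hsub
  obtain ⟨C, hC, hbalance⟩ := exists_relEnergy_balance_le hP B
  have hahi := B.alo_pos.trans_le B.alo_le_ahi
  refine ⟨C / c, B.ahi * C, by positivity, by positivity,
    fun {a ψ T ε εh γ γh ρ w ρh wh} hpair t ht x hx => ?_⟩
  obtain ⟨ha_lo, ha_hi⟩ := hpair.area_mem x hx
  have ha0 : 0 < a x := B.alo_pos.trans_le ha_lo
  have hκ : 0 ≤ B.rlo * B.γlo / 8 :=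
    div_nonneg (mul_nonneg B.rlo_pos.le B.γlo_pos.le) (by norm_num)
  have hcoercive : a x * (C * ((ρ t x - ρh t x) ^ 2 + ε ^ 2 * (w t x - wh t x) ^ 2)) ≤
      C / c * relEnergyDensity P a ε ρ w ρh wh t x :=
    calc a x * (C * ((ρ t x - ρh t x) ^ 2 + ε ^ 2 * (w t x - wh t x) ^ 2))
        = C / c * (a x * (c * ((ρ t x - ρh t x) ^ 2 + ε ^ 2 * (w t x - wh t x) ^ 2))) := by
          field_simp
      _ ≤ C / c * relEnergyDensity P a ε ρ w ρh wh t x := by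
        unfold relEnergyDensity
        gcongr
        exact (henergy ε _ _ _ _ hpair.abs_ε_le (hpair.flow.density_mem t ht x hx)
          (hpair.refFlow.density_mem t ht x hx) (hpair.flow.abs_velocity_le t ht x hx)
          (hpair.refFlow.abs_velocity_le t ht x hx)).1
  have hcube := mul_le_mul_of_nonneg_right ha_lo
    (by positivity : 0 ≤ B.rlo * B.γlo / 8 * |w t x - wh t x| ^ 3)
  have hsource := mul_le_mul_of_nonneg_right ha_hi
    (by positivity : 0 ≤ C * (|γ - γh| ^ ((3 : ℝ) / 2) + |ε ^ 2 - εh ^ 2|))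
  linear_combination hbalance hpair t ht x hx + hcoercive + hcube + hsource

lemma abs_relEnergyFlux_le {t x : ℝ} (hpair : IsGasFlowPair B P a ψ T ε εh γ γh ρ w ρh wh)
    (ht : t ∈ Icc 0 T) (hx : x ∈ Icc 0 B.ℓ) :
    |relEnergyFlux P a ψ ε ρ w ρh wh t x| ≤ 2 * B.ahi * B.rhi * B.wbar
      * (|enthalpy P ψ ε ρ w t x - enthalpy P ψ εh ρh wh t x|
        + |ε ^ 2 - εh ^ 2| * B.wbar ^ 2 / 2) := by
  have ha := hpair.area_mem x hx
  have hwh := hpair.refFlow.abs_velocity_le t ht x hx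
  have hm := abs_momentum_sub_le_two_mul B.rlo_pos.le (hpair.flow.density_mem t ht x hx)
    (hpair.refFlow.density_mem t ht x hx) (hpair.flow.abs_velocity_le t ht x hx) hwh
  have hh : |enthalpy P ψ ε ρ w t x - enthalpy P ψ ε ρh wh t x| ≤
      |enthalpy P ψ ε ρ w t x - enthalpy P ψ εh ρh wh t x|
        + |ε ^ 2 - εh ^ 2| * B.wbar ^ 2 / 2 :=
    calc |enthalpy P ψ ε ρ w t x - enthalpy P ψ ε ρh wh t x|
        = |enthalpy P ψ ε ρ w t x - enthalpy P ψ εh ρh wh t x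
            - (ε ^ 2 - εh ^ 2) * wh t x ^ 2 / 2| := by unfold enthalpy; ring_nf
      _ ≤ |enthalpy P ψ ε ρ w t x - enthalpy P ψ εh ρh wh t x|
            + |(ε ^ 2 - εh ^ 2) * wh t x ^ 2 / 2| := abs_sub _ _
      _ ≤ _ := by
        rw [abs_div, abs_mul, abs_two, abs_pow]
        gcongr
  have hahi := B.alo_pos.trans_le B.alo_le_ahi
  calc |relEnergyFlux P a ψ ε ρ w ρh wh t x|
      = a x * |ρ t x * w t x - ρh t x * wh t x|
          * |enthalpy P ψ ε ρ w t x - enthalpy P ψ ε ρh wh t x| := by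
        rw [relEnergyFlux, abs_mul, mul_assoc, mul_assoc, ← mul_sub, abs_mul,
          abs_of_nonneg (B.alo_pos.le.trans ha.1)]
    _ ≤ B.ahi * (2 * B.rhi * B.wbar) * (|enthalpy P ψ ε ρ w t x - enthalpy P ψ εh ρh wh t x|
        + |ε ^ 2 - εh ^ 2| * B.wbar ^ 2 / 2) :=
      mul_le_mul (mul_le_mul ha.2 hm (abs_nonneg _) hahi.le) hh (abs_nonneg _)
        (mul_nonneg hahi.le ((abs_nonneg _).trans hm))
    _ = _ := by ring

lemma exists_abs_relEnergyFlux_zero_add_abs_relEnergyFlux_length_le (P : ℝ → ℝ) (B : PipeBounds) :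
    ∃ C : ℝ, 0 ≤ C ∧ ∀ {a ψ T ε εh γ γh ρ w ρh wh},
      IsGasFlowPair B P a ψ T ε εh γ γh ρ w ρh wh → ∀ t ∈ Icc 0 T,
      |relEnergyFlux P a ψ ε ρ w ρh wh t 0| + |relEnergyFlux P a ψ ε ρ w ρh wh t B.ℓ| ≤
        C * (|ε ^ 2 - εh ^ 2| + boundaryEnthalpyDist P ψ B.ℓ ε εh ρ w ρh wh t) := by
  set A := 2 * B.ahi * B.rhi * B.wbar
  have hA : 0 ≤ A := by
    have := B.alo_pos.trans_le B.alo_le_ahi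
    have := B.rlo_pos.trans_le B.rlo_le_rhi
    have := B.wbar_pos
    positivity
  refine ⟨A * (2 + B.wbar ^ 2), by positivity,
    fun {a ψ T ε εh γ γh ρ w ρh wh} hpair t ht => ?_⟩
  have hdist_zero : |enthalpy P ψ ε ρ w t 0 - enthalpy P ψ εh ρh wh t 0| ≤
      boundaryEnthalpyDist P ψ B.ℓ ε εh ρ w ρh wh t :=
    Real.abs_le_sqrt (le_add_of_nonneg_right (sq_nonneg _))
  have hdist_length : |enthalpy P ψ ε ρ w t B.ℓ - enthalpy P ψ εh ρh wh t B.ℓ| ≤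
      boundaryEnthalpyDist P ψ B.ℓ ε εh ρ w ρh wh t :=
    Real.abs_le_sqrt (le_add_of_nonneg_left (sq_nonneg _))
  have hcoeff : 0 ≤ 2 * A * |ε ^ 2 - εh ^ 2|
      + A * B.wbar ^ 2 * boundaryEnthalpyDist P ψ B.ℓ ε εh ρ w ρh wh t :=
    add_nonneg (by positivity) (mul_nonneg (by positivity) (Real.sqrt_nonneg _))
  linear_combination abs_relEnergyFlux_le hpair ht (left_mem_Icc.2 B.ℓ_nonneg)
    + abs_relEnergyFlux_le hpair ht (right_mem_Icc.2 B.ℓ_nonneg)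
    + mul_le_mul_of_nonneg_left hdist_zero hA
    + mul_le_mul_of_nonneg_left hdist_length hA + hcoeff

lemma exists_integral_relEnergyDensity_add_le (hP : ContDiff ℝ 3 P) (B : PipeBounds)
    (hsub : ∀ r ∈ Icc B.rlo B.rhi, 4 * B.εbar ^ 2 * B.wbar ^ 2 ≤ r * deriv (deriv P) r) :
    ∃ κ lam C : ℝ, 0 < κ ∧ 0 ≤ lam ∧ 0 ≤ C ∧ ∀ {a ψ T ε εh γ γh ρ w ρh wh},
      IsGasFlowPair B P a ψ T ε εh γ γh ρ w ρh wh → ∀ τ ∈ Icc 0 T,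
      (∫ x in 0..B.ℓ, relEnergyDensity P a ε ρ w ρh wh τ x)
          + κ * ∫ t in 0..τ, ∫ x in 0..B.ℓ, |w t x - wh t x| ^ 3 ≤
        Real.exp (lam * τ) * ((∫ x in 0..B.ℓ, relEnergyDensity P a ε ρ w ρh wh 0 x)
          + C * (τ * (|γ - γh| ^ ((3 : ℝ) / 2) + |ε ^ 2 - εh ^ 2|)
            + ∫ t in 0..τ, boundaryEnthalpyDist P ψ B.ℓ ε εh ρ w ρh wh t)) := by
  have hP2 : ContDiff ℝ 2 P := hP.of_le (by norm_num)
  obtain ⟨lam, C, hlam, hC, hdissipation⟩ := exists_relEnergy_dissipation hP B hsub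
  obtain ⟨D, hD, hflux⟩ := exists_abs_relEnergyFlux_zero_add_abs_relEnergyFlux_length_le P B
  have hℓ := B.ℓ_nonneg
  have hκ : 0 < B.alo * (B.rlo * B.γlo / 8) :=
    mul_pos B.alo_pos (div_pos (mul_pos B.rlo_pos B.γlo_pos) (by norm_num))
  refine ⟨B.alo * (B.rlo * B.γlo / 8), lam, B.ℓ * C + D, hκ, hlam, by positivity,
    fun {a ψ T ε εh γ γh ρ w ρh wh} hpair τ hτ => ?_⟩
  have hρ := hpair.flow.contDiff_density
  have hw := hpair.flow.contDiff_velocity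
  have hρh := hpair.refFlow.contDiff_density
  have hwh := hpair.refFlow.contDiff_velocity
  have hdist : Continuous (boundaryEnthalpyDist P ψ B.ℓ ε εh ρ w ρh wh) :=
    continuous_boundaryEnthalpyDist hP2 hpair.contDiff_potential hρ hw hρh hwh
  have htime : Icc 0 τ ⊆ Icc 0 T := Icc_subset_Icc_right hτ.2
  set G := |γ - γh| ^ ((3 : ℝ) / 2) + |ε ^ 2 - εh ^ 2|
  have hsource (t) (ht : t ∈ Icc 0 τ) : B.ℓ * (C * G)
      + |relEnergyFlux P a ψ ε ρ w ρh wh t 0| + |relEnergyFlux P a ψ ε ρ w ρh wh t B.ℓ| ≤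
      (B.ℓ * C + D) * (G + boundaryEnthalpyDist P ψ B.ℓ ε εh ρ w ρh wh t) := by
    have hcoeff : 0 ≤ D * |γ - γh| ^ ((3 : ℝ) / 2)
        + B.ℓ * C * boundaryEnthalpyDist P ψ B.ℓ ε εh ρ w ρh wh t :=
      add_nonneg (by positivity) (mul_nonneg (by positivity) (Real.sqrt_nonneg _))
    linear_combination hflux hpair t (htime ht) + hcoeff
  have hgronwall := integral_add_integral_le_of_balance_le
    (contDiff_relEnergyDensity (ε := ε) hP2 hpair.contDiff_area hρ hw hρh hwh)
    (contDiff_relEnergyFlux (ε := ε) hP2 hpair.contDiff_area hpair.contDiff_potential hρ hw hρh hwh)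
    (by fun_prop) (by fun_prop) hlam (by positivity) hℓ hτ.1 (fun t x => by positivity)
    (fun t ht => hdissipation hpair t (htime ht)) hsource
  simp only [intervalIntegral.integral_const_mul] at hgronwall
  rwa [intervalIntegral.integral_add intervalIntegrable_const (hdist.intervalIntegrable _ _),
    intervalIntegral.integral_const, sub_zero, smul_eq_mul] at hgronwall

lemma stateDistSq_eq_integral (hρ : Continuous (uncurry ρ)) (hw : Continuous (uncurry w))
    (hρh : Continuous (uncurry ρh)) (hwh : Continuous (uncurry wh)) (t : ℝ) :
    stateDistSq ℓ ε ρ w ρh wh t =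
      ∫ x in 0..ℓ, ((ρ t x - ρh t x) ^ 2 + ε ^ 2 * (w t x - wh t x) ^ 2) := by
  rw [stateDistSq, intervalIntegral.integral_add, intervalIntegral.integral_const_mul] <;>
    exact (by fun_prop : Continuous _).intervalIntegrable _ _

lemma stateDistSq_nonneg {t : ℝ} (hℓ : 0 ≤ ℓ) : 0 ≤ stateDistSq ℓ ε ρ w ρh wh t :=
  add_nonneg (intervalIntegral.integral_nonneg hℓ fun _ _ => sq_nonneg _)
    (mul_nonneg (sq_nonneg ε) (intervalIntegral.integral_nonneg hℓ fun _ _ => sq_nonneg _))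

lemma exists_integral_relEnergyDensity_mem_Icc (hP : ContDiff ℝ 2 P) (B : PipeBounds)
    (hsub : ∀ r ∈ Icc B.rlo B.rhi, 4 * B.εbar ^ 2 * B.wbar ^ 2 ≤ r * deriv (deriv P) r) :
    ∃ c C : ℝ, 0 < c ∧ 0 < C ∧ ∀ {a ψ T ε εh γ γh ρ w ρh wh},
      IsGasFlowPair B P a ψ T ε εh γ γh ρ w ρh wh → ∀ t ∈ Icc 0 T,
      ∫ x in 0..B.ℓ, relEnergyDensity P a ε ρ w ρh wh t x ∈
        Icc (c * stateDistSq B.ℓ ε ρ w ρh wh t) (C * stateDistSq B.ℓ ε ρ w ρh wh t) := by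
  obtain ⟨c, C, hc, hC, henergy⟩ :=
    exists_relEnergy_mem_Icc hP B.rlo_pos B.wbar_pos B.εbar_pos hsub
  have halo := B.alo_pos
  have hahi := halo.trans_le B.alo_le_ahi
  refine ⟨B.alo * c, B.ahi * C, by positivity, by positivity,
    fun {a ψ T ε εh γ γh ρ w ρh wh} hpair t ht => ?_⟩
  have hρ := hpair.flow.contDiff_density
  have hw := hpair.flow.contDiff_velocity
  have hρh := hpair.refFlow.contDiff_density
  have hwh := hpair.refFlow.contDiff_velocity
  have he := contDiff_relEnergyDensity (ε := ε) hP hpair.contDiff_area hρ hw hρh hwh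
  have hN_int : IntervalIntegrable
      (fun x => (ρ t x - ρh t x) ^ 2 + ε ^ 2 * (w t x - wh t x) ^ 2) volume 0 B.ℓ :=
    (by fun_prop : Continuous _).intervalIntegrable _ _
  have he_int : IntervalIntegrable (relEnergyDensity P a ε ρ w ρh wh t) volume 0 B.ℓ :=
    (by fun_prop : Continuous _).intervalIntegrable _ _
  have hpointwise (x) (hx : x ∈ Icc 0 B.ℓ) := henergy ε _ _ _ _ hpair.abs_ε_le
    (hpair.flow.density_mem t ht x hx) (hpair.refFlow.density_mem t ht x hx)
    (hpair.flow.abs_velocity_le t ht x hx) (hpair.refFlow.abs_velocity_le t ht x hx)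
  rw [stateDistSq_eq_integral hρ.continuous hw.continuous hρh.continuous hwh.continuous,
    ← intervalIntegral.integral_const_mul, ← intervalIntegral.integral_const_mul]
  constructor
  · refine intervalIntegral.integral_mono_on B.ℓ_nonneg (hN_int.const_mul _) he_int fun x hx => ?_
    rw [mul_assoc]
    exact mul_le_mul (hpair.area_mem x hx).1 (hpointwise x hx).1 (by positivity)
      (halo.le.trans (hpair.area_mem x hx).1)
  · refine intervalIntegral.integral_mono_on B.ℓ_nonneg he_int (hN_int.const_mul _) fun x hx => ?_
    rw [mul_assoc]
    exact mul_le_mul (hpair.area_mem x hx).2 (hpointwise x hx).2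
      ((by positivity : (0 : ℝ) ≤ _).trans (hpointwise x hx).1) hahi.le

lemma add_le_div_min_mul_exp_mul {c κ lam C₀ C N V N₀ G S τ : ℝ} (hc : 0 < c) (hκ : 0 < κ)
    (hC₀ : 0 ≤ C₀) (hC : 0 ≤ C) (hN : 0 ≤ N) (hV : 0 ≤ V) (hN₀ : 0 ≤ N₀) (hG : 0 ≤ G) (hS : 0 ≤ S)
    (hτ : 0 ≤ τ) (h : c * N + κ * V ≤ Real.exp (lam * τ) * (C₀ * N₀ + C * (τ * G + S))) :
    N + V ≤ (C₀ + C) / min c κ * Real.exp ((lam + 1) * τ) * (N₀ + G + S) := by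
  have hmin : 0 < min c κ := lt_min hc hκ
  have hτ_exp : τ ≤ Real.exp τ := (le_add_of_nonneg_right zero_le_one).trans (Real.add_one_le_exp τ)
  have hone_exp : 1 ≤ Real.exp τ := Real.one_le_exp hτ
  have hN₀_exp : C₀ * N₀ ≤ C₀ * (Real.exp τ * N₀) := by
    gcongr; exact le_mul_of_one_le_left hN₀ hone_exp
  have hS_exp : C * S ≤ C * (Real.exp τ * S) := by
    gcongr; exact le_mul_of_one_le_left hS hone_exp
  have hG_exp : C * (τ * G) ≤ C * (Real.exp τ * G) := by gcongr
  have hcross : 0 ≤ Real.exp τ * (C * N₀ + C₀ * (G + S)) := by positivity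
  have hscaled : min c κ * (N + V) ≤
      (C₀ + C) * Real.exp ((lam + 1) * τ) * (N₀ + G + S) :=
    calc min c κ * (N + V) = min c κ * N + min c κ * V := mul_add _ _ _
      _ ≤ c * N + κ * V := by gcongr; exacts [min_le_left _ _, min_le_right _ _]
      _ ≤ Real.exp (lam * τ) * (C₀ * N₀ + C * (τ * G + S)) := h
      _ ≤ Real.exp (lam * τ) * ((C₀ + C) * Real.exp τ * (N₀ + G + S)) := by
        gcongr
        linear_combination hN₀_exp + hS_exp + hG_exp + hcross
      _ = (C₀ + C) * Real.exp ((lam + 1) * τ) * (N₀ + G + S) := by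
        rw [add_mul lam, one_mul, Real.exp_add]; ring
  calc N + V ≤ (C₀ + C) * Real.exp ((lam + 1) * τ) * (N₀ + G + S) / min c κ :=
        (le_div_iff₀' hmin).2 hscaled
    _ = _ := by ring

theorem stability_estimate_single_pipe_general (hP : ContDiff ℝ 3 P) (B : PipeBounds)
    (hsub : ∀ r ∈ Icc B.rlo B.rhi, 4 * B.εbar ^ 2 * B.wbar ^ 2 ≤ r * deriv (deriv P) r) :
    ∃ chat Chat : ℝ, 0 < chat ∧ 0 < Chat ∧ ∀ {a ψ T ε εh γ γh ρ w ρh wh},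
      IsGasFlowPair B P a ψ T ε εh γ γh ρ w ρh wh → ∀ τ ∈ Icc 0 T,
      stateDistSq B.ℓ ε ρ w ρh wh τ + (∫ s in 0..τ, ∫ x in 0..B.ℓ, |w s x - wh s x| ^ 3) ≤
        Chat * Real.exp (chat * τ) * (stateDistSq B.ℓ ε ρ w ρh wh 0
          + |γ - γh| ^ ((3 : ℝ) / 2) + |ε ^ 2 - εh ^ 2|
          + ∫ s in 0..τ, boundaryEnthalpyDist P ψ B.ℓ ε εh ρ w ρh wh s) := by
  obtain ⟨c, C₀, hc, hC₀, hequiv⟩ :=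
    exists_integral_relEnergyDensity_mem_Icc (hP.of_le (by norm_num)) B hsub
  obtain ⟨κ, lam, C, hκ, hlam, hC, hgronwall⟩ := exists_integral_relEnergyDensity_add_le hP B hsub
  refine ⟨lam + 1, (C₀ + C) / min c κ, by positivity, div_pos (by positivity) (lt_min hc hκ),
    fun {a ψ T ε εh γ γh ρ w ρh wh} hpair τ hτ => ?_⟩
  have hdist (t) : 0 ≤ stateDistSq B.ℓ ε ρ w ρh wh t := stateDistSq_nonneg B.ℓ_nonneg
  have hdissipated : 0 ≤ ∫ s in 0..τ, ∫ x in 0..B.ℓ, |w s x - wh s x| ^ 3 :=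
    intervalIntegral.integral_nonneg hτ.1 fun s _ =>
      intervalIntegral.integral_nonneg B.ℓ_nonneg fun x _ => by positivity
  have hboundary : 0 ≤ ∫ s in 0..τ, boundaryEnthalpyDist P ψ B.ℓ ε εh ρ w ρh wh s :=
    intervalIntegral.integral_nonneg hτ.1 fun s _ => Real.sqrt_nonneg _
  have hzero : (0 : ℝ) ∈ Icc 0 T := ⟨le_rfl, hτ.1.trans hτ.2⟩
  rw [add_assoc (stateDistSq B.ℓ ε ρ w ρh wh 0)]
  refine add_le_div_min_mul_exp_mul hc hκ hC₀.le hC (hdist τ) hdissipated (hdist 0)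
    (by positivity) hboundary hτ.1 ?_
  refine (add_le_add_left (hequiv hpair τ hτ).1 _).trans ((hgronwall hpair τ hτ).trans ?_)
  gcongr
  exact (hequiv hpair 0 hzero).2

end GasFlow

/-- stability estimate for the rescaled barotropic gas flow
system on a single pipe. Under assumptions (A1)–(A2) there exist constants
`ĉ, Ĉ > 0`, depending only on the bounds in (A1)–(A2) and the Lipschitz bounds
of `(ρ̂,ŵ)`, such that for any pair of classical solutions `(ρ,w)` (parameters
`ε,γ`) and `(ρ̂,ŵ)` (parameters `ε̂,γ̂`, Lipschitz continuous) and all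
`τ ∈ [0,T]`:
`‖ρ(τ)−ρ̂(τ)‖²_{L²} + ε²‖w(τ)−ŵ(τ)‖²_{L²} + ∫₀^τ ‖w−ŵ‖³_{L³} ds
 ≤ Ĉ e^{ĉτ} (‖ρ(0)−ρ̂(0)‖²_{L²} + ε²‖w(0)−ŵ(0)‖²_{L²}
    + |γ−γ̂|^{3/2} + |ε²−ε̂²| + ∫₀^τ |h_∂−ĥ_∂|_∂ ds)`. -/
theorem stability_estimate_single_pipe
    (ℓ T g : ℝ) (hℓ : 0 < ℓ) (hT : 0 ≤ T)
    (P : ℝ → ℝ) (hP : ContDiff ℝ (⊤ : ℕ∞) P) (hPconv : StrictConvexOn ℝ (Set.Ioi 0) P)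
    (rlo rhi wbar εbar alo ahi γlo γhi gzbar : ℝ) (K : NNReal)
    (hrlo : 0 < rlo) (hrr : rlo ≤ rhi) (hwbar : 0 < wbar) (hεbar : 0 < εbar)
    (halo : 0 < alo) (haa : alo ≤ ahi) (hγlo : 0 < γlo) (hγγ : γlo ≤ γhi)
    -- (A1): subsonicity condition on the pressure potential
    (hA1 : ∀ r ∈ Set.Icc rlo rhi, 4 * εbar ^ 2 * wbar ^ 2 ≤ r * deriv (deriv P) r) :
    ∃ chat Chat : ℝ, 0 < chat ∧ 0 < Chat ∧
      ∀ (a z : ℝ → ℝ) (ε εh γ γh : ℝ) (ρ w ρh wh : ℝ → ℝ → ℝ),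
        ContDiff ℝ 1 a → ContDiff ℝ 1 z →
        (∀ x, alo ≤ a x ∧ a x ≤ ahi) → (∀ x, |g * z x| ≤ gzbar) →
        0 ≤ ε → ε ≤ εbar → 0 ≤ εh → εh ≤ εbar →
        γlo ≤ γ → γ ≤ γhi → γlo ≤ γh → γh ≤ γhi →
        -- classical solutions: C¹ regularity
        ContDiff ℝ 1 (Function.uncurry ρ) → ContDiff ℝ 1 (Function.uncurry w) →
        ContDiff ℝ 1 (Function.uncurry ρh) → ContDiff ℝ 1 (Function.uncurry wh) →
        -- (ρ̂,ŵ) is Lipschitz continuous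
        LipschitzWith K (Function.uncurry ρh) →
        LipschitzWith K (Function.uncurry wh) →
        -- (A2): uniform state bounds
        (∀ τ ∈ Set.Icc (0:ℝ) T, ∀ x ∈ Set.Icc (0:ℝ) ℓ,
          rlo ≤ ρ τ x ∧ ρ τ x ≤ rhi ∧ rlo ≤ ρh τ x ∧ ρh τ x ≤ rhi
            ∧ |w τ x| ≤ wbar ∧ |wh τ x| ≤ wbar) →
        -- (ρ,w) solves the system with parameters ε, γ
        (∀ τ ∈ Set.Icc (0:ℝ) T, ∀ x ∈ Set.Icc (0:ℝ) ℓ,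
          a x * deriv (fun s => ρ s x) τ
            + deriv (fun y => a y * ρ τ y * w τ y) x = 0) →
        (∀ τ ∈ Set.Icc (0:ℝ) T, ∀ x ∈ Set.Icc (0:ℝ) ℓ,
          ε ^ 2 * deriv (fun s => w s x) τ
            + deriv (fun y => ε ^ 2 * (w τ y) ^ 2 / 2 + deriv P (ρ τ y) + g * z y) x
            + γ * |w τ x| * w τ x = 0) →
        -- (ρ̂,ŵ) solves the system with parameters ε̂, γ̂
        (∀ τ ∈ Set.Icc (0:ℝ) T, ∀ x ∈ Set.Icc (0:ℝ) ℓ,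
          a x * deriv (fun s => ρh s x) τ
            + deriv (fun y => a y * ρh τ y * wh τ y) x = 0) →
        (∀ τ ∈ Set.Icc (0:ℝ) T, ∀ x ∈ Set.Icc (0:ℝ) ℓ,
          εh ^ 2 * deriv (fun s => wh s x) τ
            + deriv (fun y => εh ^ 2 * (wh τ y) ^ 2 / 2 + deriv P (ρh τ y) + g * z y) x
            + γh * |wh τ x| * wh τ x = 0) →
        -- stability estimate
        ∀ τ ∈ Set.Icc (0:ℝ) T,
          (∫ x in (0:ℝ)..ℓ, (ρ τ x - ρh τ x) ^ 2)
              + ε ^ 2 * (∫ x in (0:ℝ)..ℓ, (w τ x - wh τ x) ^ 2)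
              + (∫ s in (0:ℝ)..τ, ∫ x in (0:ℝ)..ℓ, |w s x - wh s x| ^ 3)
            ≤ Chat * Real.exp (chat * τ) *
              ((∫ x in (0:ℝ)..ℓ, (ρ 0 x - ρh 0 x) ^ 2)
                + ε ^ 2 * (∫ x in (0:ℝ)..ℓ, (w 0 x - wh 0 x) ^ 2)
                + |γ - γh| ^ ((3:ℝ) / 2) + |ε ^ 2 - εh ^ 2|
                + ∫ s in (0:ℝ)..τ, Real.sqrt
                    (((ε ^ 2 * (w s 0) ^ 2 / 2 + deriv P (ρ s 0) + g * z 0)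
                        - (εh ^ 2 * (wh s 0) ^ 2 / 2 + deriv P (ρh s 0) + g * z 0)) ^ 2
                      + ((ε ^ 2 * (w s ℓ) ^ 2 / 2 + deriv P (ρ s ℓ) + g * z ℓ)
                        - (εh ^ 2 * (wh s ℓ) ^ 2 / 2 + deriv P (ρh s ℓ) + g * z ℓ)) ^ 2)) := by
  obtain ⟨chat, Chat, hchat, hChat, hestimate⟩ :=
    stability_estimate_single_pipe_general (contDiff_infty.1 hP 3)
      ⟨ℓ, rlo, rhi, wbar, εbar, alo, ahi, γlo, γhi, K,
        hℓ.le, hrlo, hrr, hwbar, hεbar, halo, haa, hγlo, hγγ⟩ hA1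
  refine ⟨chat, Chat, hchat, hChat, fun a z ε εh γ γh ρ w ρh wh ha hz hax _ hε hε_le _ _ hγ hγ_le
    _ _ hρ hw hρh hwh hLρ hLw hbounds hmass hmom hmassh hmomh => ?_⟩
  simpa only [stateDistSq, boundaryEnthalpyDist, enthalpy] using
    hestimate (ψ := fun x => g * z x) (γh := γh)
      { contDiff_area := ha
        contDiff_potential := contDiff_const.mul hz
        area_mem := fun x _ => hax x
        abs_ε_le := (abs_of_nonneg hε).trans_le hε_le
        γ_mem := ⟨hγ, hγ_le⟩
        flow := ⟨hρ, hw, fun t ht x hx => (hbounds t ht x hx).imp_right And.left,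
          fun t ht x hx => (hbounds t ht x hx).2.2.2.2.1, hmass, hmom⟩
        refFlow := ⟨hρh, hwh, fun t ht x hx => (hbounds t ht x hx).2.2.imp_right And.left,
          fun t ht x hx => (hbounds t ht x hx).2.2.2.2.2, hmassh, hmomh⟩
        lipschitz_density := hLρ
        lipschitz_velocity := hLw }
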